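/- arXiv:1303.0417 — 3 statements merged into one kernel-verified Lean document; each statement's English description precedes it below -/
import Mathlib

section
/- The IRLS iterates satisfy the sufficient-decrease inequality Φ(x^{(t+1)}) ≤ Φ(x^{(t)}) − (p/2) (Σ_{j=1}^n μ_j^{(t)}) ‖x^{(t+1)} − x^{(t)}‖² for every t ≥ 0. -/
open scoped ContDiff RealInnerProductSpace
open Filter

/-- The concave power function `s ↦ s ^ q`, `0 ≤ q ≤ 1`, lies below its tangent at `r > 0`. -/
theorem rpow_le_rpow_add_mul_sub {q r s : ℝ} (hq0 : 0 ≤ q) (hq1 : q ≤ 1) (hr : 0 < r)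
    (hs : 0 ≤ s) : s ^ q ≤ r ^ q + q * r ^ (q - 1) * (s - r) := by
  have hsr : 0 ≤ s / r := div_nonneg hs hr.le
  have hb : (s / r) ^ q ≤ 1 + q * (s / r - 1) := by
    simpa using rpow_one_add_le_one_add_mul_self (s := s / r - 1) (by linarith) hq0 hq1
  have hrq : 0 < r ^ q := Real.rpow_pos_of_pos hr q
  rw [Real.div_rpow hs hr.le, div_le_iff₀ hrq] at hb
  rw [Real.rpow_sub_one hr.ne']
  calc s ^ q ≤ (1 + q * (s / r - 1)) * r ^ q := hb
    _ = r ^ q + q * (r ^ q / r) * (s - r) := by field_simp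

/-- Parallel axis identity: moving from `x` to the weighted barycenter `y` of the points `a j`
changes the weighted sum of squared distances by the total weight times `-‖y - x‖ ^ 2`. -/
theorem sum_mul_norm_sub_sq_sub_of_barycenter {ι E : Type*} [Fintype ι] [NormedAddCommGroup E]
    [InnerProductSpace ℝ E] (μ : ι → ℝ) (a : ι → E) (x y : E)
    (hy : (∑ j, μ j) • y = ∑ j, μ j • a j) :
    ∑ j, μ j * (‖y - a j‖ ^ 2 - ‖x - a j‖ ^ 2) = -((∑ j, μ j) * ‖y - x‖ ^ 2) := by
  have hcross : ∑ j, μ j * ⟪y - x, y - a j⟫ = 0 := by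
    simp_rw [← real_inner_smul_right, ← inner_sum, smul_sub, Finset.sum_sub_distrib,
      ← Finset.sum_smul, hy, sub_self, inner_zero_right]
  have hterm : ∀ j, μ j * (‖y - a j‖ ^ 2 - ‖x - a j‖ ^ 2) =
      2 * (μ j * ⟪y - x, y - a j⟫) - μ j * ‖y - x‖ ^ 2 := fun j ↦ by
    have h : x - a j = (y - a j) - (y - x) := by abel
    rw [h, norm_sub_sq_real (y - a j) (y - x), real_inner_comm (y - x)]
    ring
  simp_rw [hterm, Finset.sum_sub_distrib, ← Finset.mul_sum, hcross, ← Finset.sum_mul]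
  ring

theorem stmt_11
    (d n : ℕ) (hd : 1 ≤ d) (hn : 1 ≤ n)
    (a : Fin n → EuclideanSpace ℝ (Fin d))
    (w : Fin n → ℝ) (hw : ∀ j, 0 < w j)
    (ε : ℝ) (hε : 0 < ε)
    (p : ℝ) (hp0 : 0 < p) (hp2 : p ≤ 2)
    (Φ : EuclideanSpace ℝ (Fin d) → ℝ)
    (hΦ : ∀ x, Φ x = ∑ j, w j * (‖x - a j‖ ^ 2 + ε) ^ (p / 2))
    (x : ℕ → EuclideanSpace ℝ (Fin d))
    (hx : ∀ t, x (t + 1) =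
      (∑ j, w j * (‖x t - a j‖ ^ 2 + ε) ^ (p / 2 - 1))⁻¹ •
        ∑ j, (w j * (‖x t - a j‖ ^ 2 + ε) ^ (p / 2 - 1)) • a j) :
    ∀ t, Φ (x (t + 1)) ≤ Φ (x t) -
      p / 2 * (∑ j, w j * (‖x t - a j‖ ^ 2 + ε) ^ (p / 2 - 1)) * ‖x (t + 1) - x t‖ ^ 2 := by
  intro t
  have : Nonempty (Fin n) := ⟨⟨0, hn⟩⟩
  set μ : Fin n → ℝ := fun j ↦ w j * (‖x t - a j‖ ^ 2 + ε) ^ (p / 2 - 1) with hμ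
  have hμ_pos : 0 < ∑ j, μ j :=
    Finset.sum_pos (fun j _ ↦ mul_pos (hw j) (by positivity)) Finset.univ_nonempty
  have hbary : (∑ j, μ j) • x (t + 1) = ∑ j, μ j • a j := by
    rw [hx t, smul_inv_smul₀ hμ_pos.ne']
  have htangent : Φ (x (t + 1)) ≤
      Φ (x t) + p / 2 * ∑ j, μ j * (‖x (t + 1) - a j‖ ^ 2 - ‖x t - a j‖ ^ 2) := by
    rw [hΦ, hΦ, Finset.mul_sum, ← Finset.sum_add_distrib]
    refine Finset.sum_le_sum fun j _ ↦ ?_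
    have h := rpow_le_rpow_add_mul_sub (q := p / 2) (r := ‖x t - a j‖ ^ 2 + ε)
      (s := ‖x (t + 1) - a j‖ ^ 2 + ε) (by linarith) (by linarith) (by positivity) (by positivity)
    refine (mul_le_mul_of_nonneg_left h (hw j).le).trans_eq ?_
    simp only [hμ]
    ring
  rw [sum_mul_norm_sub_sq_sub_of_barycenter μ a (x t) (x (t + 1)) hbary] at htangent
  linarith
end

section
/- The successive differences of the IRLS iterates vanish: ‖x^{(t+1)} − x^{(t)}‖ → 0 as t → ∞. -/
open scoped ContDiff RealInnerProductSpace
open Filter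

/-- Tangent-line bound for the concave power `s ↦ s ^ q`, `0 ≤ q ≤ 1`. -/
lemma rpow_le_tangent {q u v : ℝ} (hq0 : 0 ≤ q) (hq1 : q ≤ 1) (hu : 0 < u) (hv : 0 ≤ v) :
    v ^ q ≤ u ^ q + q * u ^ (q - 1) * (v - u) := by
  have hs : -1 ≤ v / u - 1 := by linarith [div_nonneg hv hu.le]
  have h := rpow_one_add_le_one_add_mul_self hs hq0 hq1
  rw [add_sub_cancel, Real.div_rpow hv hu.le, div_le_iff₀ (Real.rpow_pos_of_pos hu q)] at h
  refine h.trans_eq ?_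
  rw [Real.rpow_sub_one hu.ne']
  field_simp

/-- Parallel-axis identity for the weighted mean `y` of the points `a j`. -/
lemma sum_mul_norm_sub_sq_sub_eq {ι E : Type*} [Fintype ι] [NormedAddCommGroup E]
    [InnerProductSpace ℝ E] (μ : ι → ℝ) (a : ι → E) (x y : E)
    (hy : (∑ j, μ j) • y = ∑ j, μ j • a j) :
    ∑ j, μ j * (‖x - a j‖ ^ 2 - ‖y - a j‖ ^ 2) = (∑ j, μ j) * ‖x - y‖ ^ 2 := by
  have key : ∀ j, μ j * (‖x - a j‖ ^ 2 - ‖y - a j‖ ^ 2) =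
      μ j * ‖x - y‖ ^ 2 + 2 * ⟪x - y, μ j • y - μ j • a j⟫ := fun j => by
    rw [← sub_add_sub_cancel x y (a j), norm_add_sq_real, ← smul_sub, real_inner_smul_right]
    ring
  simp_rw [key]
  rw [Finset.sum_add_distrib, ← Finset.sum_mul, ← Finset.mul_sum, ← inner_sum,
    Finset.sum_sub_distrib, ← Finset.sum_smul, hy, sub_self, inner_zero_right, mul_zero, add_zero]

/-- Sufficient decrease of the smoothed objective under one reweighted averaging step. -/
lemma irls_sufficient_decrease {ι E : Type*} [Fintype ι] [NormedAddCommGroup E]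
    [InnerProductSpace ℝ E] {w : ι → ℝ} (hw : ∀ j, 0 ≤ w j) (a : ι → E) {ε q : ℝ} (hε : 0 < ε)
    (hq0 : 0 ≤ q) (hq1 : q ≤ 1) {x y : E}
    (hy : (∑ j, w j * (‖x - a j‖ ^ 2 + ε) ^ (q - 1)) • y =
      ∑ j, (w j * (‖x - a j‖ ^ 2 + ε) ^ (q - 1)) • a j) :
    ∑ j, w j * (‖y - a j‖ ^ 2 + ε) ^ q +
        q * ((∑ j, w j * (‖x - a j‖ ^ 2 + ε) ^ (q - 1)) * ‖x - y‖ ^ 2) ≤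
      ∑ j, w j * (‖x - a j‖ ^ 2 + ε) ^ q := by
  rw [← sum_mul_norm_sub_sq_sub_eq _ a x y hy, Finset.mul_sum, ← Finset.sum_add_distrib]
  refine Finset.sum_le_sum fun j _ => ?_
  have h := mul_le_mul_of_nonneg_left (rpow_le_tangent (u := ‖x - a j‖ ^ 2 + ε)
    (v := ‖y - a j‖ ^ 2 + ε) hq0 hq1 (by positivity) (by positivity)) (hw j)
  linarith

/-- If a sequence bounded below decreases by at least `c * r t ^ 2` at each step, then `r → 0`. -/
lemma tendsto_zero_of_sq_decrease {f r : ℕ → ℝ} {c : ℝ} (hc : 0 < c) (hf : ∀ t, 0 ≤ f t)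
    (h : ∀ t, f (t + 1) + c * r t ^ 2 ≤ f t) : Tendsto r atTop (nhds 0) := by
  have hanti : Antitone f := antitone_nat_of_succ_le fun t => by
    nlinarith [h t, mul_nonneg hc.le (sq_nonneg (r t))]
  have hlim := tendsto_atTop_ciInf hanti ⟨0, by rintro _ ⟨t, rfl⟩; exact hf t⟩
  have hdiff : Tendsto (fun t => (f t - f (t + 1)) / c) atTop (nhds 0) := by
    simpa using (hlim.sub (hlim.comp (tendsto_add_atTop_nat 1))).div_const c
  have hsq : Tendsto (fun t => r t ^ 2) atTop (nhds 0) :=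
    squeeze_zero (fun t => sq_nonneg _)
      (fun t => by rw [le_div_iff₀ hc]; linarith [h t]) hdiff
  rw [tendsto_zero_iff_abs_tendsto_zero]
  simpa [Function.comp_def, Real.sqrt_sq_eq_abs] using hsq.sqrt

theorem stmt_13
    (d n : ℕ) (hd : 1 ≤ d) (hn : 1 ≤ n)
    (a : Fin n → EuclideanSpace ℝ (Fin d))
    (w : Fin n → ℝ) (hw : ∀ j, 0 < w j)
    (ε : ℝ) (hε : 0 < ε)
    (p : ℝ) (hp0 : 0 < p) (hp2 : p ≤ 2)
    (Φ : EuclideanSpace ℝ (Fin d) → ℝ)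
    (hΦ : ∀ x, Φ x = ∑ j, w j * (‖x - a j‖ ^ 2 + ε) ^ (p / 2))
    (x : ℕ → EuclideanSpace ℝ (Fin d))
    (hx : ∀ t, x (t + 1) =
      (∑ j, w j * (‖x t - a j‖ ^ 2 + ε) ^ (p / 2 - 1))⁻¹ •
        ∑ j, (w j * (‖x t - a j‖ ^ 2 + ε) ^ (p / 2 - 1)) • a j) :
    Tendsto (fun t => ‖x (t + 1) - x t‖) atTop (nhds 0) := by
  have hpos : ∀ z j, 0 < ‖z - a j‖ ^ 2 + ε := fun z j => by positivity
  have hterm : ∀ (s : ℝ) z j, 0 < w j * (‖z - a j‖ ^ 2 + ε) ^ s := fun s z j =>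
    mul_pos (hw j) (Real.rpow_pos_of_pos (hpos z j) s)
  let i : Fin n := ⟨0, hn⟩
  set M : ℕ → ℝ := fun t => ∑ j, w j * (‖x t - a j‖ ^ 2 + ε) ^ (p / 2 - 1)
  have hMpos : ∀ t, 0 < M t := fun t =>
    Finset.sum_pos (fun j _ => hterm _ _ j) ⟨i, Finset.mem_univ i⟩
  have hstep : ∀ t, Φ (x (t + 1)) + p / 2 * (M t * ‖x (t + 1) - x t‖ ^ 2) ≤ Φ (x t) := fun t => by
    rw [hΦ, hΦ, norm_sub_rev]
    refine irls_sufficient_decrease (fun j => (hw j).le) a hε (by linarith) (by linarith) ?_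
    rw [hx t, smul_inv_smul₀ (hMpos t).ne']
  have hanti : Antitone fun t => Φ (x t) := antitone_nat_of_succ_le fun t => by
    have : 0 ≤ p / 2 * (M t * ‖x (t + 1) - x t‖ ^ 2) := by
      have := hMpos t
      positivity
    linarith [hstep t]
  have hΦpos : ∀ z, 0 < Φ z := fun z => by
    rw [hΦ]
    exact Finset.sum_pos (fun j _ => hterm _ _ j) ⟨i, Finset.mem_univ i⟩
  set B : ℝ := (Φ (x 0) / w i) ^ (p / 2)⁻¹ with hB
  have hBpos : 0 < B := Real.rpow_pos_of_pos (div_pos (hΦpos _) (hw i)) _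
  have hdist : ∀ t, ‖x t - a i‖ ^ 2 + ε ≤ B := fun t => by
    rw [hB, Real.le_rpow_inv_iff_of_pos (hpos _ _).le (div_pos (hΦpos _) (hw i)).le (by linarith),
      le_div_iff₀' (hw i)]
    refine le_trans ?_ (hanti (Nat.zero_le t))
    simp only [hΦ]
    exact Finset.single_le_sum (f := fun j => w j * (‖x t - a j‖ ^ 2 + ε) ^ (p / 2))
      (fun j _ => (hterm _ _ j).le) (Finset.mem_univ i)
  have hMlower : ∀ t, w i * B ^ (p / 2 - 1) ≤ M t := fun t =>
    (mul_le_mul_of_nonneg_left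
      (Real.rpow_le_rpow_of_nonpos (hpos _ _) (hdist t) (by linarith)) (hw i).le).trans
    (Finset.single_le_sum (f := fun j => w j * (‖x t - a j‖ ^ 2 + ε) ^ (p / 2 - 1))
      (fun j _ => (hterm _ _ j).le) (Finset.mem_univ i))
  refine tendsto_zero_of_sq_decrease (f := fun t => Φ (x t)) (c := p / 2 * (w i * B ^ (p / 2 - 1)))
    (mul_pos (by linarith) (mul_pos (hw i) (Real.rpow_pos_of_pos hBpos _)))
    (fun t => (hΦpos _).le) fun t => le_trans ?_ (hstep t)
  rw [mul_assoc (p / 2)]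
  gcongr
  exact hMlower t
end

section
/- Suppose 0 < p ≤ 2, x* ∈ ℝ^d is a stationary point of Φ with all IRLS iterates contained in a closed ball B_r(x*) of radius r around x*, and x* is the only stationary point of Φ in B_r(x*). Then the IRLS iterates (x^{(t)}) converge to x*. -/
open scoped ContDiff RealInnerProductSpace
open Filter

/-- The tangent line inequality for the concave function `u ↦ u ^ s`, `0 ≤ s ≤ 1`. -/
theorem Real.rpow_le_rpow_add_mul_sub {s u v : ℝ} (hs0 : 0 ≤ s) (hs1 : s ≤ 1)
    (hu : 0 ≤ u) (hv : 0 < v) : u ^ s ≤ v ^ s + s * v ^ (s - 1) * (u - v) := by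
  have hratio : -1 ≤ u / v - 1 := by
    have : 0 ≤ u / v := by positivity
    linarith
  have hbern := rpow_one_add_le_one_add_mul_self hratio hs0 hs1
  rw [add_sub_cancel, Real.div_rpow hu hv.le, div_le_iff₀ (by positivity)] at hbern
  refine hbern.trans_eq ?_
  rw [Real.rpow_sub_one hv.ne']
  field_simp

/-- If `f` converges along the orbit of a continuous map `T`, then `f` takes the same value at a
cluster point of the orbit and at its image. -/
theorem MapClusterPt.apply_eq_of_tendsto_comp {X Y : Type*} [TopologicalSpace X]
    [TopologicalSpace Y] [T2Space Y] {T : X → X} {f : X → Y} {x : ℕ → X} {z : X} {L : Y}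
    (hz : MapClusterPt z atTop x) (hT : ContinuousAt T z) (hfz : ContinuousAt f z)
    (hfT : ContinuousAt f (T z)) (hx : ∀ t, x (t + 1) = T (x t))
    (hL : Tendsto (fun t => f (x t)) atTop (nhds L)) : f (T z) = f z := by
  have hcluster_eq : ∀ {y : Y} {u : ℕ → Y}, MapClusterPt y atTop u →
      Tendsto u atTop (nhds L) → y = L := fun hy hu =>
    eq_of_nhds_neBot (NeBot.mono hy (inf_le_inf_left _ hu))
  have hshift : Tendsto (fun t => f (T (x t))) atTop (nhds L) := by
    simpa only [Function.comp_def, hx] using hL.comp (tendsto_add_atTop_nat 1)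
  have hcomp : ContinuousAt (fun y => f (T y)) z := ContinuousAt.comp hfT hT
  rw [hcluster_eq (hz.continuousAt_comp hcomp) hshift, hcluster_eq (hz.continuousAt_comp hfz) hL]

namespace IRLS

variable {ι E : Type*} [NormedAddCommGroup E]

/-- The IRLS weights at `z`. -/
noncomputable def weight (a : ι → E) (w : ι → ℝ) (ε p : ℝ) (z : E) (j : ι) : ℝ :=
  w j * (‖z - a j‖ ^ 2 + ε) ^ (p / 2 - 1)

variable {a : ι → E} {w : ι → ℝ} {ε p : ℝ}

theorem continuous_weight (hε : 0 < ε) (j : ι) : Continuous fun z => weight a w ε p z j := by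
  refine continuous_const.mul (Continuous.rpow_const (by fun_prop) fun z => Or.inl ?_)
  positivity

variable [Fintype ι]

/-- The smoothed objective. -/
noncomputable def objective (a : ι → E) (w : ι → ℝ) (ε p : ℝ) (z : E) : ℝ :=
  ∑ j, w j * (‖z - a j‖ ^ 2 + ε) ^ (p / 2)

theorem sum_weight_pos [Nonempty ι] (hw : ∀ j, 0 < w j) (hε : 0 < ε) (z : E) :
    0 < ∑ j, weight a w ε p z j :=
  Finset.sum_pos (fun j _ => mul_pos (hw j) (by positivity)) Finset.univ_nonempty

theorem continuous_objective (hε : 0 < ε) : Continuous (objective a w ε p) := by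
  refine continuous_finsetSum _ fun j _ => continuous_const.mul
    (Continuous.rpow_const (by fun_prop) fun z => Or.inl ?_)
  positivity

theorem objective_nonneg (hw : ∀ j, 0 < w j) (hε : 0 < ε) (z : E) : 0 ≤ objective a w ε p z :=
  Finset.sum_nonneg fun j _ => mul_nonneg (hw j).le (by positivity)

variable [InnerProductSpace ℝ E]

/-- The weighted mean of the points `a j` with weights `m j`. -/
noncomputable def weightedMean (m : ι → ℝ) (a : ι → E) : E := (∑ j, m j)⁻¹ • ∑ j, m j • a j

theorem sum_smul_sub_eq {m : ι → ℝ} (hm : ∑ j, m j ≠ 0) (a : ι → E) (z : E) :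
    ∑ j, m j • (z - a j) = (∑ j, m j) • (z - weightedMean m a) := by
  simp only [weightedMean, smul_sub, smul_inv_smul₀ hm, Finset.sum_sub_distrib, Finset.sum_smul]

theorem sum_mul_norm_weightedMean_sub_sq {m : ι → ℝ} (hm : ∑ j, m j ≠ 0) (a : ι → E) (z : E) :
    ∑ j, m j * (‖weightedMean m a - a j‖ ^ 2 - ‖z - a j‖ ^ 2) =
      -((∑ j, m j) * ‖z - weightedMean m a‖ ^ 2) := by
  set c := weightedMean m a with hc
  have hterm : ∀ j, m j * (‖c - a j‖ ^ 2 - ‖z - a j‖ ^ 2) =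
      m j * ‖z - c‖ ^ 2 - 2 * ⟪z - c, m j • (z - a j)⟫ := by
    intro j
    have hsplit : c - a j = (z - a j) - (z - c) := by abel
    rw [hsplit, norm_sub_sq_real, inner_smul_right, real_inner_comm]
    ring
  rw [Finset.sum_congr rfl fun j _ => hterm j, Finset.sum_sub_distrib, ← Finset.mul_sum,
    ← inner_sum, sum_smul_sub_eq hm, ← Finset.sum_mul, inner_smul_right,
    real_inner_self_eq_norm_sq]
  ring

/-- One step of the IRLS iteration. -/
noncomputable def step (a : ι → E) (w : ι → ℝ) (ε p : ℝ) (z : E) : E :=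
  weightedMean (weight a w ε p z) a

theorem continuous_step [Nonempty ι] (hw : ∀ j, 0 < w j) (hε : 0 < ε) :
    Continuous (step a w ε p) := by
  refine Continuous.smul (Continuous.inv₀ ?_ fun z => (sum_weight_pos hw hε z).ne') ?_
  · exact continuous_finsetSum _ fun j _ => continuous_weight hε j
  · exact continuous_finsetSum _ fun j _ => (continuous_weight hε j).smul continuous_const

theorem hasGradientAt_objective [CompleteSpace E] (hε : 0 < ε) (z : E) :
    HasGradientAt (objective a w ε p) (p • ∑ j, weight a w ε p z j • (z - a j)) z := by
  rw [hasGradientAt_iff_hasFDerivAt]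
  have hterm : ∀ j, HasFDerivAt (fun y => w j * (‖y - a j‖ ^ 2 + ε) ^ (p / 2))
      (w j • ((p / 2 * (‖z - a j‖ ^ 2 + ε) ^ (p / 2 - 1)) •
        (2 • (innerSL ℝ (z - a j)).comp (ContinuousLinearMap.id ℝ E)))) z := by
    intro j
    have hpos : ‖z - a j‖ ^ 2 + ε ≠ 0 := by positivity
    exact ((((hasFDerivAt_id z).sub_const (a j)).norm_sq.add_const ε).rpow_const
      (Or.inl hpos)).const_mul (w j)
  refine (HasFDerivAt.fun_sum fun j _ => hterm j).congr_fderiv ?_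
  ext y
  simp only [sum_apply, smul_apply,
    ContinuousLinearMap.comp_apply, ContinuousLinearMap.id_apply, innerSL_apply_apply,
    InnerProductSpace.toDual_apply_apply, inner_smul_left, sum_inner, smul_eq_mul, nsmul_eq_mul,
    Finset.mul_sum, weight, RCLike.conj_to_real]
  refine Finset.sum_congr rfl fun j _ => ?_
  push_cast
  ring

theorem gradient_objective [CompleteSpace E] [Nonempty ι] (hw : ∀ j, 0 < w j) (hε : 0 < ε)
    (z : E) : gradient (objective a w ε p) z =
      p • (∑ j, weight a w ε p z j) • (z - step a w ε p z) := by
  rw [(hasGradientAt_objective hε z).gradient, sum_smul_sub_eq (sum_weight_pos hw hε z).ne', step]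

/-- Sufficient decrease of the objective along an IRLS step. -/
theorem objective_step_le [Nonempty ι] (hw : ∀ j, 0 < w j) (hε : 0 < ε) (hp0 : 0 ≤ p)
    (hp2 : p ≤ 2) (z : E) : objective a w ε p (step a w ε p z) ≤ objective a w ε p z -
      p / 2 * ((∑ j, weight a w ε p z j) * ‖z - step a w ε p z‖ ^ 2) := by
  have hsum := sum_mul_norm_weightedMean_sub_sq (sum_weight_pos (p := p) (a := a) hw hε z).ne' a z
  rw [← step] at hsum
  rw [sub_eq_add_neg, ← mul_neg, ← hsum, objective, objective, Finset.mul_sum,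
    ← Finset.sum_add_distrib]
  refine Finset.sum_le_sum fun j _ => ?_
  refine (mul_le_mul_of_nonneg_left (Real.rpow_le_rpow_add_mul_sub (s := p / 2)
    (v := ‖z - a j‖ ^ 2 + ε) (by linarith) (by linarith) (by positivity) (by positivity))
    (hw j).le).trans_eq ?_
  rw [weight]
  ring

/-- Every cluster point of the IRLS iterates is a fixed point of the IRLS step. -/
theorem step_eq_of_mapClusterPt [Nonempty ι] (hw : ∀ j, 0 < w j) (hε : 0 < ε) (hp0 : 0 < p)
    (hp2 : p ≤ 2) {x : ℕ → E} (hx : ∀ t, x (t + 1) = step a w ε p (x t)) {z : E}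
    (hz : MapClusterPt z atTop x) : step a w ε p z = z := by
  have hanti : Antitone fun t => objective a w ε p (x t) := by
    refine antitone_nat_of_succ_le fun t => ?_
    rw [hx]
    refine (objective_step_le hw hε hp0.le hp2 (x t)).trans (sub_le_self _ ?_)
    have := sum_weight_pos (a := a) (p := p) hw hε (x t)
    positivity
  have hbdd : BddBelow (Set.range fun t => objective a w ε p (x t)) :=
    ⟨0, by rintro _ ⟨t, rfl⟩; exact objective_nonneg hw hε _⟩
  have heq := hz.apply_eq_of_tendsto_comp (continuous_step hw hε).continuousAt
    (continuous_objective hε).continuousAt (continuous_objective hε).continuousAt hx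
    (tendsto_atTop_ciInf hanti hbdd)
  have hle := objective_step_le (a := a) hw hε hp0.le hp2 z
  by_contra hne
  have hnorm : 0 < ‖z - step a w ε p z‖ := norm_pos_iff.2 (sub_ne_zero.2 (Ne.symm hne))
  have hmass := sum_weight_pos (a := a) (p := p) hw hε z
  have : 0 < p / 2 * ((∑ j, weight a w ε p z j) * ‖z - step a w ε p z‖ ^ 2) := by positivity
  linarith

end IRLS

theorem stmt_17
    (d n : ℕ) (hd : 1 ≤ d) (hn : 1 ≤ n)
    (a : Fin n → EuclideanSpace ℝ (Fin d))
    (w : Fin n → ℝ) (hw : ∀ j, 0 < w j)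
    (ε : ℝ) (hε : 0 < ε)
    (p : ℝ) (hp0 : 0 < p) (hp2 : p ≤ 2)
    (Φ : EuclideanSpace ℝ (Fin d) → ℝ)
    (hΦ : ∀ x, Φ x = ∑ j, w j * (‖x - a j‖ ^ 2 + ε) ^ (p / 2))
    (x : ℕ → EuclideanSpace ℝ (Fin d))
    (hx : ∀ t, x (t + 1) =
      (∑ j, w j * (‖x t - a j‖ ^ 2 + ε) ^ (p / 2 - 1))⁻¹ •
        ∑ j, (w j * (‖x t - a j‖ ^ 2 + ε) ^ (p / 2 - 1)) • a j)
    (xstar : EuclideanSpace ℝ (Fin d)) (r : ℝ)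
    (hstat : gradient Φ xstar = 0)
    (hball : ∀ t, x t ∈ Metric.closedBall xstar r)
    (honly : ∀ z ∈ Metric.closedBall xstar r, gradient Φ z = 0 → z = xstar) :
    Tendsto x atTop (nhds xstar) := by
  have : Nonempty (Fin n) := ⟨⟨0, hn⟩⟩
  obtain rfl : Φ = IRLS.objective a w ε p := funext hΦ
  refine (isCompact_closedBall xstar r).tendsto_nhds_of_unique_mapClusterPt
    (Eventually.of_forall hball) fun z hz hcluster => honly z hz ?_
  rw [IRLS.gradient_objective hw hε, IRLS.step_eq_of_mapClusterPt hw hε hp0 hp2 hx hcluster,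
    sub_self, smul_zero, smul_zero]
end
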